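/- Let V be a finite set of agents, for each i ∈ V a nonempty finite action set A_i, unary utilities q_i : A_i → ℝ, and let G be a simple undirected graph on V with a payoff function q_e : A_i × A_j → ℝ for each edge e = {i,j} of G. Suppose v ∈ V is a leaf of G (a vertex of degree exactly 1) with unique neighbor u. Define a modified unary utility q'_u(a_u) := q_u(a_u) + max_{a_v ∈ A_v} ( q_v(a_v) + q_{uv}(a_u, a_v) ), keep all other unary utilities and payoffs unchanged, and let G' be the induced graph on V \ {v}. Then max over joint actions a ∈ ∏_{i∈V} A_i of Q(a; G) equals max over joint actions a' ∈ ∏_{i∈V\{v}} A_i of the factorized value on G' with q_u replaced by q'_u. (This leaf-elimination step is the key correctness lemma underlying the claim that DCOPs induced by undirected acyclic coordination graphs are exactly solvable.) -/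

import Mathlib

/-! The leaf `v` enters the factorized value of a joint action `a` only through
`q v (a v) + p u v (a u) (a v)`: the edges of `G` are `{v, u}` together with the edges of the
graph induced on `V \ {v}` (`edgeFinset_eq_insert`), so the value splits as the value of the
restriction of `a` to `V \ {v}` plus that term (`Qval_split`). Replacing `q u` by the modified
utility adds to the value of the restriction exactly the maximum of that term over the actions
of `v` (`Qval_update`). Hence every joint action is dominated by its restriction, and every
joint action of the remaining agents is matched by extending it with a maximizing action
of `v`. -/

open scoped Classical

/-- The factorized joint value `Q(a; E) = Σ_i q_i(a_i) + Σ_{{i,j}∈E} q_{ij}(a_i, a_j)` of a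
joint action `a` for a coordination problem with unary utilities `q`, (symmetric) pairwise
payoffs `p`, and edge set `E`. -/
noncomputable def Qval {V : Type} [Fintype V] (A : V → Type)
    (q : ∀ i, A i → ℝ) (p : ∀ i j, A i → A j → ℝ)
    (hsym : ∀ i j x y, p i j x y = p j i y x)
    (E : Finset (Sym2 V)) (a : ∀ i, A i) : ℝ :=
  (∑ i, q i (a i)) +
    ∑ e ∈ E, Sym2.lift ⟨fun i j => p i j (a i) (a j), fun i j => hsym i j (a i) (a j)⟩ e

/-- The edges of `G` are the leaf edge and the edges avoiding the leaf. -/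
lemma edgeFinset_eq_insert {V : Type} [Fintype V] (G : SimpleGraph V) (v u : V)
    (hleaf : G.degree v = 1) (hadj : G.Adj v u) :
    G.edgeFinset = insert s(v, u)
      ((G.induce {i : V | i ≠ v}).edgeFinset.image
        (Sym2.map (Subtype.val : {i : V // i ≠ v} → V))) := by
  have huniq : ∀ w, G.Adj v w → w = u := by
    obtain ⟨w, -, hw⟩ := SimpleGraph.degree_eq_one_iff_existsUnique_adj.mp hleaf
    intro x hx
    rw [hw x hx, hw u hadj]
  ext e
  rw [Finset.mem_insert, Finset.mem_image, SimpleGraph.mem_edgeFinset]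
  constructor
  · induction e using Sym2.ind with
    | _ x y =>
      intro h
      rw [SimpleGraph.mem_edgeSet] at h
      by_cases hx : x = v
      · subst hx
        left
        rw [huniq y h]
      · by_cases hy : y = v
        · subst hy
          left
          rw [huniq x h.symm, Sym2.eq_swap]
        · right
          refine ⟨s(⟨x, hx⟩, ⟨y, hy⟩), ?_, rfl⟩
          rw [SimpleGraph.mem_edgeFinset]
          exact h
  · rintro (rfl | ⟨e, he, rfl⟩)
    · exact hadj
    · rw [SimpleGraph.mem_edgeFinset] at he
      induction e using Sym2.ind with
      | _ x y => exact he

/-- The leaf contributes exactly its own utility and the payoff of its unique edge. -/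
lemma Qval_split {V : Type} [Fintype V] (A : V → Type)
    (q : ∀ i, A i → ℝ) (p : ∀ i j, A i → A j → ℝ)
    (hsym : ∀ i j x y, p i j x y = p j i y x)
    (G : SimpleGraph V) (v u : V)
    (hleaf : G.degree v = 1) (hadj : G.Adj v u) (a : ∀ i, A i) :
    Qval A q p hsym G.edgeFinset a =
      Qval (V := {i : V // i ≠ v}) (fun i => A i.val) (fun i => q i.val)
          (fun i j x y => p i.val j.val x y) (fun i j x y => hsym i.val j.val x y)
          (G.induce {i : V | i ≠ v}).edgeFinset (fun i => a i.val) +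
        (q v (a v) + p u v (a u) (a v)) := by
  have hnot : s(v, u) ∉ (G.induce {i : V | i ≠ v}).edgeFinset.image
      (Sym2.map (Subtype.val : {i : V // i ≠ v} → V)) := by
    intro h
    obtain ⟨e, -, he⟩ := Finset.mem_image.mp h
    have hv : v ∈ Sym2.map (Subtype.val : {i : V // i ≠ v} → V) e := by
      rw [he]
      exact Sym2.mem_mk_left v u
    obtain ⟨x, -, hx⟩ := Sym2.mem_map.mp hv
    exact x.2 hx
  have hunary : ∑ i, q i (a i) = q v (a v) + ∑ i : {i : V // i ≠ v}, q i.val (a i.val) :=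
    Fintype.sum_eq_add_sum_subtype_ne (fun i => q i (a i)) v
  unfold Qval
  rw [edgeFinset_eq_insert G v u hleaf hadj, Finset.sum_insert hnot,
    Finset.sum_image (fun _ _ _ _ h => Sym2.map.injective Subtype.val_injective h), hunary,
    Sym2.lift_mk]
  have hedges : ∀ e : Sym2 {i : V // i ≠ v},
      Sym2.lift ⟨fun i j => p i j (a i) (a j), fun i j => hsym i j (a i) (a j)⟩
        (Sym2.map Subtype.val e) =
      Sym2.lift ⟨fun i j : {i : V // i ≠ v} => p i.val j.val (a i.val) (a j.val),
        fun i j => hsym i.val j.val (a i.val) (a j.val)⟩ e := by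
    intro e
    induction e using Sym2.ind with
    | _ x y => rfl
  rw [Finset.sum_congr rfl (fun e _ => hedges e)]
  dsimp only
  rw [hsym v u]
  ring

/-- Increasing the unary utility of `u` by `m` increases the value by `m (b u)`. -/
lemma Qval_update {V : Type} [Fintype V] (A : V → Type)
    (q : ∀ i, A i → ℝ) (p : ∀ i j, A i → A j → ℝ)
    (hsym : ∀ i j x y, p i j x y = p j i y x) (v u : V) (hu : u ≠ v)
    (E : Finset (Sym2 {i : V // i ≠ v})) (m : A u → ℝ) (b : ∀ i : {i : V // i ≠ v}, A i.val) :
    Qval (V := {i : V // i ≠ v}) (fun i => A i.val)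
        (fun i x => Function.update q u (fun y => q u y + m y) i.val x)
        (fun i j x y => p i.val j.val x y) (fun i j x y => hsym i.val j.val x y) E b =
      Qval (V := {i : V // i ≠ v}) (fun i => A i.val) (fun i => q i.val)
        (fun i j x y => p i.val j.val x y) (fun i j x y => hsym i.val j.val x y) E b +
        m (b ⟨u, hu⟩) := by
  have hsum : ∑ i : {i : V // i ≠ v},
        Function.update q u (fun y => q u y + m y) i.val (b i) =
      ∑ i : {i : V // i ≠ v}, q i.val (b i) + m (b ⟨u, hu⟩) := by
    rw [Fintype.sum_eq_add_sum_subtype_ne _ (⟨u, hu⟩ : {i : V // i ≠ v}),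
      Fintype.sum_eq_add_sum_subtype_ne (fun i : {i : V // i ≠ v} => q i.val (b i)) ⟨u, hu⟩]
    have hrest : ∀ i : {i : {i : V // i ≠ v} // i ≠ ⟨u, hu⟩},
        Function.update q u (fun y => q u y + m y) i.val.val (b i.val) =
          q i.val.val (b i.val) := by
      intro i
      rw [Function.update_of_ne (fun h => i.2 (Subtype.ext h))]
    rw [Finset.sum_congr rfl (fun i _ => hrest i)]
    simp only [Function.update_self]
    ring
  unfold Qval
  rw [hsum]
  ring

/-- **Leaf elimination.** If `v` is a leaf of the coordination graph `G` (degree exactly 1)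
with unique neighbor `u`, then the maximum of the factorized value over all joint actions
equals the maximum, over joint actions of the remaining agents, of the factorized value on
the induced graph on `V \ {v}` where the unary utility of `u` is replaced by
`q'_u(a_u) = q_u(a_u) + max_{a_v} (q_v(a_v) + q_{uv}(a_u, a_v))`. -/
theorem leaf_elimination {V : Type} [Fintype V] (A : V → Type)
    [∀ i, Fintype (A i)] [∀ i, Nonempty (A i)]
    (q : ∀ i, A i → ℝ) (p : ∀ i j, A i → A j → ℝ)
    (hsym : ∀ i j x y, p i j x y = p j i y x)
    (G : SimpleGraph V) (v u : V)
    (hleaf : G.degree v = 1) (hadj : G.Adj v u) :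
    Finset.univ.sup' Finset.univ_nonempty (Qval A q p hsym G.edgeFinset) =
      Finset.univ.sup' Finset.univ_nonempty
        (Qval (V := {i : V // i ≠ v}) (fun i => A i.val)
          (fun i x =>
            Function.update q u
              (fun y => q u y +
                Finset.univ.sup' Finset.univ_nonempty (fun z : A v => q v z + p u v y z))
              i.val x)
          (fun i j x y => p i.val j.val x y)
          (fun i j x y => hsym i.val j.val x y)
          (G.induce {i : V | i ≠ v}).edgeFinset) := by
  have hu : u ≠ v := hadj.ne'
  apply le_antisymm
  · refine Finset.sup'_le _ _ fun a _ => ?_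
    refine le_trans ?_ (Finset.le_sup' _ (Finset.mem_univ fun i : {i : V // i ≠ v} => a i.val))
    rw [Qval_split A q p hsym G v u hleaf hadj a, Qval_update A q p hsym v u hu]
    have hle := Finset.le_sup' (fun z : A v => q v z + p u v (a u) z) (Finset.mem_univ (a v))
    gcongr
  · refine Finset.sup'_le _ _ fun b _ => ?_
    obtain ⟨z, -, hz⟩ := Finset.exists_mem_eq_sup' Finset.univ_nonempty
      (fun z : A v => q v z + p u v (b ⟨u, hu⟩) z)
    -- Every joint action of the remaining agents extends to `V` with `v` playing `z`.
    obtain ⟨a, rfl, hb⟩ : ∃ a : ∀ i, A i, a v = z ∧ (fun i : {i : V // i ≠ v} => a i.val) = b := by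
      refine ⟨fun i => if h : i = v then h ▸ z else b ⟨i, h⟩, by simp, ?_⟩
      funext i
      simp [i.2]
    subst hb
    refine le_trans (le_of_eq ?_) (Finset.le_sup' _ (Finset.mem_univ a))
    rw [Qval_split A q p hsym G v u hleaf hadj a, Qval_update A q p hsym v u hu, hz]
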